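/- Let φ be a social choice function. If the set of voters V is finite and the range of φ has cardinality at most 3, then: φ individually strategy-proof implies that φ satisfies the preference reversal property. -/

import Mathlib

/-- A weak ordering on the set `A` of alternatives: a reflexive, transitive
and total relation. -/
def IsWeakOrdering {A : Type*} (R : A → A → Prop) : Prop :=
  Reflexive R ∧ Transitive R ∧ ∀ x y : A, R x y ∨ R y x

/-- `x ≻ y`: `x ≿ y` and not `y ≿ x`. -/
def StrictPref {A : Type*} (R : A → A → Prop) (x y : A) : Prop :=
  R x y ∧ ¬ R y x

/-- Individual strategy-proofness: for every profile `P`, voter `v` and feasible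
deviation (a profile `Q` agreeing with `P` off `v`), it is not the case that
`φ Q ≻_{P v} φ P`. -/
def ISP {A V : Type*} (W : V → Set (A → A → Prop)) (φ : (∀ v : V, W v) → A) : Prop :=
  ∀ P Q : ∀ v : V, W v, ∀ v : V, (∀ w : V, w ≠ v → P w = Q w) →
    ¬ StrictPref (P v).1 (φ Q) (φ P)

/-- Group strategy-proofness: there are no nonempty coalition `D`, true profile `P`
and manipulated profile `Q` (agreeing with `P` off `D`) such that every member of
`D` strictly prefers `φ Q` to `φ P` according to its true preference. -/
def GSP {A V : Type*} (W : V → Set (A → A → Prop)) (φ : (∀ v : V, W v) → A) : Prop :=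
  ¬ ∃ (D : Set V) (P Q : ∀ v : V, W v), D.Nonempty ∧ (∀ v ∉ D, P v = Q v) ∧
      ∀ v ∈ D, StrictPref (P v).1 (φ Q) (φ P)

/-- The Preference Reversal property. -/
def PrefReversal {A V : Type*} (W : V → Set (A → A → Prop)) (φ : (∀ v : V, W v) → A) : Prop :=
  ∀ P Q : ∀ v : V, W v, φ P ≠ φ Q →
    ∃ v : V, (P v).1 (φ P) (φ Q) ∧ (Q v).1 (φ Q) (φ P) ∧ P v ≠ Q v

/-- The Almost Preference Reversal property. -/
def AlmostPrefReversal {A V : Type*} (W : V → Set (A → A → Prop))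
    (φ : (∀ v : V, W v) → A) : Prop :=
  ∀ P Q : ∀ v : V, W v, φ P ≠ φ Q →
    (∃ v : V, (P v).1 (φ P) (φ Q) ∧ P v ≠ Q v) ∧
    (∃ w : V, (Q w).1 (φ Q) (φ P) ∧ P w ≠ Q w)

/-- `W` resolves the `P`-indifference at `a`. -/
def Resolves {A : Type*} (W P : A → A → Prop) (a : A) : Prop :=
  ∀ x : A, x ≠ a → P a x → StrictPref W a x

/-- `W` is an `(a,b)`-resolvent of `(P, Q)`. -/
def IsResolvent {A : Type*} (W : A → A → Prop) (a b : A) (P Q : A → A → Prop) : Prop :=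
  Resolves W P a ∧ Resolves W Q b

/-- A complete set of preferences. -/
def CompleteSet {A : Type*} (O : Set (A → A → Prop)) : Prop :=
  ∀ P ∈ O, ∀ Q ∈ O, ∀ a b : A, a ≠ b → ¬ (P a b ∧ Q b a) →
    ∃ W ∈ O, IsResolvent W a b P Q

/-!
Along a sequence of single-voter switches, strategy-proofness turns every change of outcome into a
preference reversal by the switching voter. Hence the outcome stays at `φ P` as long as only voters
with no reversal from `φ P` to another outcome are switched.

Suppose no voter had both a reversal from `φ P` to some `c ≠ φ P` and a reversal from some
`c' ≠ φ Q` to `φ Q`. In the hybrid profile where exactly the voters without a reversal away from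
`φ P` report `Q`, the outcome would be `φ P` when reached from `P`, and `φ Q` when reached from `Q`.
So if `φ P ≠ φ Q`, some voter `v` has both. With at most three outcomes, `c = φ Q`, `c' = φ P` or
`c = c'`, and in the last case transitivity composes the reversals of `v` into one from `φ P` to
`φ Q`.
-/

/-- Voter `v` exhibits a preference reversal from `x` to `y` when its report changes from `P v` to
`Q v`; `PrefReversal W φ` asks for such a voter from `φ P` to `φ Q` whenever these outcomes
differ. -/
def IsReversal {A V : Type*} {W : V → Set (A → A → Prop)} (P Q : ∀ v : V, W v) (v : V)
    (x y : A) : Prop :=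
  (P v).1 x y ∧ (Q v).1 y x ∧ P v ≠ Q v

theorem IsWeakOrdering.of_not_strictPref {A : Type*} {R : A → A → Prop} {x y : A}
    (hR : IsWeakOrdering R) (h : ¬ StrictPref R y x) : R x y :=
  (hR.2.2 x y).elim id fun hyx => by_contra fun hxy => h ⟨hyx, hxy⟩

section

variable {A V : Type*} {W : V → Set (A → A → Prop)} {P Q : ∀ v : V, W v} {v : V} {x y z : A}

namespace IsReversal

theorem symm (h : IsReversal P Q v x y) : IsReversal Q P v y x :=
  ⟨h.2.1, h.1, h.2.2.symm⟩

theorem trans (hwo : ∀ R ∈ W v, IsWeakOrdering R) (hxy : IsReversal P Q v x y)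
    (hyz : IsReversal P Q v y z) : IsReversal P Q v x z :=
  ⟨(hwo _ (P v).2).2.1 hxy.1 hyz.1, (hwo _ (Q v).2).2.1 hyz.2.1 hxy.2.1, hxy.2.2⟩

end IsReversal

theorem isReversal_piecewise_right {M : Set V} [∀ w, Decidable (w ∈ M)] :
    IsReversal P (M.piecewise P Q) v x y ↔ v ∉ M ∧ IsReversal P Q v x y := by
  by_cases hv : v ∈ M <;> simp [IsReversal, hv]

theorem isReversal_piecewise_left {M : Set V} [∀ w, Decidable (w ∈ M)] :
    IsReversal Q (M.piecewise P Q) v x y ↔ v ∈ M ∧ IsReversal Q P v x y := by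
  by_cases hv : v ∈ M <;> simp [IsReversal, hv]

namespace ISP

variable {φ : (∀ v : V, W v) → A}

theorem isReversal_of_eq_off (hISP : ISP W φ) (hwo : ∀ R ∈ W v, IsWeakOrdering R)
    (hoff : ∀ w, w ≠ v → P w = Q w) (hPQ : φ P ≠ φ Q) : IsReversal P Q v (φ P) (φ Q) := by
  refine ⟨(hwo _ (P v).2).of_not_strictPref (hISP P Q v hoff),
    (hwo _ (Q v).2).of_not_strictPref (hISP Q P v fun w hw => (hoff w hw).symm), fun hv => hPQ ?_⟩
  congr 1
  ext1 w
  rcases eq_or_ne w v with rfl | hw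
  exacts [hv, hoff w hw]

theorem apply_piecewise_eq [DecidableEq V] (hISP : ISP W φ)
    (hwo : ∀ v, ∀ R ∈ W v, IsWeakOrdering R)
    (hstay : ∀ v R, IsReversal P Q v (φ P) (φ R) → φ R = φ P) (S : Finset V) :
    φ (S.piecewise Q P) = φ P := by
  induction S using Finset.induction_on with
  | empty => rw [Finset.piecewise_empty]
  | insert v S hv ih =>
    rw [Finset.piecewise_insert]
    set R := S.piecewise Q P
    have hRv : R v = P v := Finset.piecewise_eq_of_notMem S Q P hv
    by_contra hmove
    have hrev : IsReversal R (Function.update R v (Q v)) v (φ R)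
        (φ (Function.update R v (Q v))) :=
      hISP.isReversal_of_eq_off (hwo v) (fun w hw => (Function.update_of_ne hw _ _).symm)
        (ih ▸ Ne.symm hmove)
    simp only [IsReversal, Function.update_self, hRv, ih] at hrev
    exact hmove (hstay v _ hrev)

theorem apply_eq_of_forall_isReversal (hISP : ISP W φ)
    (hwo : ∀ v, ∀ R ∈ W v, IsWeakOrdering R) (hfin : {v | P v ≠ Q v}.Finite)
    (hstay : ∀ v R, IsReversal P Q v (φ P) (φ R) → φ R = φ P) : φ Q = φ P := by
  classical
  have hQ : hfin.toFinset.piecewise Q P = Q := by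
    ext1 v
    by_cases hv : P v = Q v <;> simp [Finset.piecewise, hv]
  rw [← hISP.apply_piecewise_eq hwo hstay hfin.toFinset, hQ]

theorem exists_isReversal_from_and_to (hISP : ISP W φ)
    (hwo : ∀ v, ∀ R ∈ W v, IsWeakOrdering R) (hfin : {v | P v ≠ Q v}.Finite)
    (hPQ : φ P ≠ φ Q) :
    ∃ v R R', (φ R ≠ φ P ∧ IsReversal P Q v (φ P) (φ R)) ∧
      (φ R' ≠ φ Q ∧ IsReversal P Q v (φ R') (φ Q)) := by
  classical
  by_contra! hnone
  let M : Set V := {v | ∃ R, φ R ≠ φ P ∧ IsReversal P Q v (φ P) (φ R)}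
  have hP : φ (M.piecewise P Q) = φ P := by
    have hfinP : {v | P v ≠ M.piecewise P Q v}.Finite :=
      hfin.subset fun v hv hvPQ => hv (by simp [Set.piecewise, hvPQ])
    refine hISP.apply_eq_of_forall_isReversal hwo hfinP fun v R hrev => ?_
    obtain ⟨hvM, hrev⟩ := isReversal_piecewise_right.mp hrev
    exact by_contra fun hne => hvM ⟨R, hne, hrev⟩
  have hQ : φ (M.piecewise P Q) = φ Q := by
    have hfinQ : {v | Q v ≠ M.piecewise P Q v}.Finite :=
      hfin.subset fun v hv hvPQ => hv (by simp [Set.piecewise, hvPQ])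
    refine hISP.apply_eq_of_forall_isReversal hwo hfinQ fun v R hrev => ?_
    obtain ⟨⟨R', hne', hrev'⟩, hrev⟩ := isReversal_piecewise_left.mp hrev
    exact by_contra fun hne => hnone v R' R ⟨hne', hrev'⟩ hne hrev.symm
  exact hPQ (hP.symm.trans hQ)

end ISP

end

theorem isp_implies_prefReversal_of_range_le_three_general {A V : Type*}
    {W : V → Set (A → A → Prop)} (hwo : ∀ v : V, ∀ R ∈ W v, IsWeakOrdering R)
    {φ : (∀ v : V, W v) → A}
    (hrange : ∃ x y z : A, ∀ P : ∀ v : V, W v, φ P = x ∨ φ P = y ∨ φ P = z)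
    (hISP : ISP W φ) {P Q : ∀ v : V, W v} (hfin : {v | P v ≠ Q v}.Finite) (hPQ : φ P ≠ φ Q) :
    ∃ v, IsReversal P Q v (φ P) (φ Q) := by
  obtain ⟨v, R, R', ⟨hRP, hfrom⟩, hRQ', hto⟩ := hISP.exists_isReversal_from_and_to hwo hfin hPQ
  have hpigeonhole : φ R = φ Q ∨ φ R' = φ P ∨ φ R = φ R' := by
    obtain ⟨x, y, z, hxyz⟩ := hrange
    grind
  rcases hpigeonhole with hR | hR' | hRR'
  · exact ⟨v, hR ▸ hfrom⟩
  · exact ⟨v, hR' ▸ hto⟩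
  · exact ⟨v, hfrom.trans (hwo v) (hRR' ▸ hto)⟩

/-- If `V` is finite and the range of `φ` has cardinality at most 3,
then individual strategy-proofness implies the preference reversal property. -/
theorem isp_implies_prefReversal_of_range_le_three {A V : Type*} [Finite V]
    (W : V → Set (A → A → Prop))
    (hne : ∀ v : V, (W v).Nonempty)
    (hwo : ∀ v : V, ∀ R ∈ W v, IsWeakOrdering R)
    (φ : (∀ v : V, W v) → A)
    (hrange : ∃ x y z : A, ∀ P : ∀ v : V, W v, φ P = x ∨ φ P = y ∨ φ P = z)
    (hISP : ISP W φ) :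
    PrefReversal W φ := by
  intro P Q hPQ
  exact isp_implies_prefReversal_of_range_le_three_general hwo hrange hISP (Set.toFinite _) hPQ
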